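/- arXiv:1607.08413 — 2 statements merged into one kernel-verified Lean document; each statement's English description precedes it below -/
import Mathlib

section
/- Let n ≥ 2 be an integer and let Λ ⊂ ℝ² be a closed set that is 2-periodic with respect to the second variable. Let 2 ≤ k ≤ n−1 and let I be a nonempty open interval such that I ∩ Π^{k*}_{ne}(Λ) is dense in I. Then there exists a nonempty open subinterval J ⊂ I such that J ∩ Π(Λ) ⊂ ⋃_{j=k}^{n} Π^j(Λ). -/
open MeasureTheory Complex

/-- Fourier transform with the convention `f̂(ξ) = ∫ e^{πixξ} f(x) dx`. -/
noncomputable def FT (f : ℝ → ℂ) (ξ : ℝ) : ℂ :=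
  ∫ x : ℝ, Complex.exp (Real.pi * Complex.I * x * ξ) * f x

/-- `e^{πiη}`. -/
noncomputable def cexpEta (η : ℝ) : ℂ := Complex.exp (Real.pi * Complex.I * η)

/-- `Λ` is 2-periodic with respect to the second variable. -/
def Periodic2 (Λ : Set (ℝ × ℝ)) : Prop :=
  ∀ ξ η : ℝ, (ξ, η) ∈ Λ ↔ (ξ, η + 2) ∈ Λ

/-- The projection `Π(Λ)` of `Λ` on the x-axis. -/
def proj (Λ : Set (ℝ × ℝ)) : Set ℝ := {ξ | ∃ η : ℝ, (ξ, η) ∈ Λ}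

/-- `Img(ξ) = {η ∈ [0,2) : (ξ,η) ∈ Λ}`. -/
def Img (Λ : Set (ℝ × ℝ)) (ξ : ℝ) : Set ℝ := {η | η ∈ Set.Ico (0 : ℝ) 2 ∧ (ξ, η) ∈ Λ}

/-- `Π^k(Λ)` for `k < n`: points of `Π(Λ)` whose `Img` has exactly `k` elements. -/
def projExact (Λ : Set (ℝ × ℝ)) (k : ℕ) : Set ℝ :=
  {ξ | ξ ∈ proj Λ ∧ (Img Λ ξ).encard = k}

/-- `Π^n(Λ)`: points of `Π(Λ)` whose `Img` has at least `n` elements. -/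
def projAtLeast (Λ : Set (ℝ × ℝ)) (n : ℕ) : Set ℝ :=
  {ξ | ξ ∈ proj Λ ∧ (n : ℕ∞) ≤ (Img Λ ξ).encard}

/-- `ψ ∈ P^{E,ξ}_l` : there are an open interval `I ∋ ξ` and `φ_1,…,φ_{l-1} ∈ L¹(ℝ)` with
`φ̂_1 + φ̂_2 ψ + ⋯ + φ̂_{l-1} ψ^{l-2} + ψ^{l-1} = 0` on `I ∩ E`. -/
def Pmem (E : Set ℝ) (ξ : ℝ) (l : ℕ) (ψ : ℝ → ℂ) : Prop :=
  ∃ a b : ℝ, ξ ∈ Set.Ioo a b ∧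
    ∃ φ : Fin (l - 1) → ℝ → ℂ, (∀ i, Integrable (φ i)) ∧
      ∀ x ∈ Set.Ioo a b ∩ E,
        (∑ i : Fin (l - 1), FT (φ i) x * ψ x ^ (i : ℕ)) + ψ x ^ (l - 1) = 0

/-- `Π^{1*}(Λ)`: those `ξ ∈ Π^1(Λ)` such that `χ ∈ P^{Π^1(Λ),ξ}_n`, where
`χ(ξ') = e^{πiη}` with `η` the unique element of `Img(ξ')`. -/
def projOneStar (Λ : Set (ℝ × ℝ)) (n : ℕ) : Set ℝ :=
  {ξ | ξ ∈ projExact Λ 1 ∧ ∃ χ : ℝ → ℂ,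
    (∀ ξ' ∈ projExact Λ 1, ∀ η ∈ Img Λ ξ', χ ξ' = cexpEta η) ∧
    Pmem (projExact Λ 1) ξ n χ}

/-- `Π^{k*}_{su}(Λ)`. -/
def projStarSu (Λ : Set (ℝ × ℝ)) (n k : ℕ) : Set ℝ :=
  {ξ | ξ ∈ projExact Λ k ∧ ∃ a b : ℝ, ξ ∈ Set.Ioo a b ∧
    ∃ φ : Fin (n - 1) → ℝ → ℂ, (∀ i, Integrable (φ i)) ∧
      ∀ ξ' ∈ Set.Ioo a b ∩ projExact Λ k, ∀ η ∈ Img Λ ξ',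
        (∑ i : Fin (n - 1), FT (φ i) ξ' * cexpEta η ^ (i : ℕ)) = -(cexpEta η ^ (n - 1))}

/-- `Π^{k*}_{ne}(Λ)` for `k ≥ 2`. -/
def projStarNe (Λ : Set (ℝ × ℝ)) (k : ℕ) : Set ℝ :=
  {ξ | ξ ∈ projExact Λ k ∧ ∃ a b : ℝ, ξ ∈ Set.Ioo a b ∧
    ∃ φ : Fin k → ℝ → ℂ, (∀ i, Integrable (φ i)) ∧
      ∀ ξ' ∈ Set.Ioo a b ∩ projExact Λ k, ∀ η ∈ Img Λ ξ',
        (∑ i : Fin k, FT (φ i) ξ' * cexpEta η ^ (i : ℕ)) = -(cexpEta η ^ k)}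

/-- `(Γ, Λ)` with `Γ = ℝ × {0,…,n-1}` is a Heisenberg uniqueness pair: every admissible
measure `μ = Σ_m (x ↦ (x,m))_*(f_m dx)` (with each `f_m ∈ L¹(ℝ)`) whose Fourier transform
`μ̂(ξ,η) = Σ_m e^{mπiη} f̂_m(ξ)` vanishes on `Λ` must be zero, i.e. each `f_m = 0` a.e. -/
def IsHUP (n : ℕ) (Λ : Set (ℝ × ℝ)) : Prop :=
  ∀ f : Fin n → ℝ → ℂ, (∀ m, Integrable (f m)) →
    (∀ ξ η : ℝ, (ξ, η) ∈ Λ → ∑ m : Fin n, cexpEta η ^ (m : ℕ) * FT (f m) ξ = 0) →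
    ∀ m, f m =ᵐ[volume] (0 : ℝ → ℂ)

lemma aux_FT_cont (f : ℝ → ℂ) (hf : Integrable f) : Continuous (FT f) := by
  have hn : ∀ x ξ : ℝ, ‖Complex.exp (Real.pi * Complex.I * x * ξ)‖ = 1 := by
    intro x ξ
    have : (Real.pi * Complex.I * x * ξ : ℂ) = ((Real.pi * x * ξ : ℝ) : ℂ) * Complex.I := by
      push_cast; ring
    rw [this, Complex.norm_exp_ofReal_mul_I]
  unfold FT
  refine MeasureTheory.continuous_of_dominated (bound := fun x => ‖f x‖) ?_ ?_ hf.norm ?_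
  · intro ξ
    refine AEStronglyMeasurable.mul ?_ hf.aestronglyMeasurable
    exact Continuous.aestronglyMeasurable (by fun_prop)
  · intro ξ
    refine Filter.Eventually.of_forall fun x => ?_
    rw [norm_mul, hn, one_mul]
  · refine Filter.Eventually.of_forall fun x => ?_
    fun_prop

lemma aux_cexp_cont : Continuous cexpEta := by
  unfold cexpEta; fun_prop

lemma aux_cexp_inj : Set.InjOn cexpEta (Set.Ico 0 2) := by
  intro x hx y hy h
  unfold cexpEta at h
  rw [Complex.exp_eq_exp_iff_exists_int] at h
  obtain ⟨m, hm⟩ := h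
  have hpi : (Real.pi : ℂ) ≠ 0 := by exact_mod_cast Real.pi_ne_zero
  have h1 : (Real.pi * Complex.I : ℂ) * x = (Real.pi * Complex.I) * (y + 2 * m) := by
    rw [hm]; ring
  have h2 : (x : ℂ) = y + 2 * m := mul_left_cancel₀ (mul_ne_zero hpi Complex.I_ne_zero) h1
  have h3 : x = y + 2 * m := by exact_mod_cast h2
  have h4 : (m : ℝ) < 1 := by linarith [hx.2, hy.1]
  have h5 : (-1 : ℝ) < m := by linarith [hx.1, hy.2]
  have h6 : m < 1 := by exact_mod_cast h4
  have h7 : -1 < m := by exact_mod_cast h5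
  have h8 : m = 0 := by omega
  subst h8
  simpa using h3

open Polynomial in
lemma aux_poly (k : ℕ) (c : Fin k → ℂ) (S : Finset ℂ) (hS : S.card = k)
    (h : ∀ w ∈ S, (∑ i : Fin k, c i * w ^ (i : ℕ)) = -(w ^ k)) (z : ℂ) :
    (∑ i : Fin k, c i * z ^ (i : ℕ)) + z ^ k = ∏ w ∈ S, (z - w) := by
  have hq : (∑ i : Fin k, C (c i) * X ^ (i : ℕ)).degree < (k : WithBot ℕ) := degree_sum_fin_lt c
  have hpm : (X ^ k + ∑ i : Fin k, C (c i) * X ^ (i : ℕ)).Monic := monic_X_pow_add hq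
  have hpd : (X ^ k + ∑ i : Fin k, C (c i) * X ^ (i : ℕ)).degree = (k : WithBot ℕ) := by
    rw [degree_add_eq_left_of_degree_lt] <;> simp [hq]
  have hgm : (∏ w ∈ S, (X - C w)).Monic := monic_prod_of_monic _ _ fun w _ => monic_X_sub_C w
  have hgd : (∏ w ∈ S, (X - C w)).degree = (k : WithBot ℕ) := by
    rw [degree_prod]; simp [hS]
  have key : (X ^ k + ∑ i : Fin k, C (c i) * X ^ (i : ℕ)) = ∏ w ∈ S, (X - C w) := by
    apply eq_of_degree_sub_lt_of_eval_finset_eq S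
    · rw [hS, ← hpd]
      exact degree_sub_lt_left (by rw [hpd, hgd]) hpm.ne_zero (by rw [hpm, hgm])
    · intro w hw
      rw [eval_prod, Finset.prod_eq_zero hw (by simp)]
      simp [eval_finsetSum, h w hw]
  have := congrArg (eval z) key
  rw [eval_prod] at this
  simp [eval_finsetSum] at this
  rw [← this, add_comm]

lemma aux_closed (Λ : Set (ℝ × ℝ)) (hclosed : IsClosed Λ) (z : ℂ) (ε : ℝ) :
    IsClosed {ξ : ℝ | ∃ η ∈ Set.Icc (0 : ℝ) 2, (ξ, η) ∈ Λ ∧ dist (cexpEta η) z ≤ ε} := by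
  have hc : IsClosed {p : ℝ × Set.Icc (0 : ℝ) 2 |
      (p.1, (p.2 : ℝ)) ∈ Λ ∧ dist (cexpEta p.2) z ≤ ε} := by
    have h1 : IsClosed {p : ℝ × Set.Icc (0 : ℝ) 2 | (p.1, (p.2 : ℝ)) ∈ Λ} :=
      IsClosed.preimage (f := fun p : ℝ × Set.Icc (0 : ℝ) 2 => (p.1, (p.2 : ℝ)))
        (by fun_prop) hclosed
    have h2 : IsClosed {p : ℝ × Set.Icc (0 : ℝ) 2 | dist (cexpEta p.2) z ≤ ε} := by
      refine isClosed_le ?_ continuous_const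
      have := aux_cexp_cont
      fun_prop
    exact h1.inter h2
  have := isClosedMap_fst_of_compactSpace _ hc
  convert this using 1
  ext ξ
  constructor
  · rintro ⟨η, h1, h2⟩
    exact ⟨(ξ, ⟨η, h1⟩), h2, rfl⟩
  · rintro ⟨⟨ξ', η, h1⟩, h2, rfl⟩
    exact ⟨η, h1, h2⟩

lemma aux_Ico (Λ : Set (ℝ × ℝ)) (hper : Periodic2 Λ) (ξ : ℝ) (z : ℂ) (ε : ℝ)
    (h : ∃ η ∈ Set.Icc (0 : ℝ) 2, (ξ, η) ∈ Λ ∧ dist (cexpEta η) z ≤ ε) :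
    ∃ η ∈ Img Λ ξ, dist (cexpEta η) z ≤ ε := by
  obtain ⟨η, h1, h2, h3⟩ := h
  rcases lt_or_eq_of_le h1.2 with h4 | h4
  · exact ⟨η, ⟨⟨h1.1, h4⟩, h2⟩, h3⟩
  · subst h4
    refine ⟨0, ⟨by simp, (hper ξ 0).2 (by simpa using h2)⟩, ?_⟩
    have : cexpEta 0 = cexpEta 2 := by
      unfold cexpEta
      have : (Real.pi * Complex.I * ((2 : ℝ) : ℂ)) = 2 * Real.pi * Complex.I := by
        push_cast; ring
      rw [this, Complex.exp_two_pi_mul_I]; simp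
    rw [this]; exact h3

theorem density_lemma (n : ℕ) (hn : 2 ≤ n) (Λ : Set (ℝ × ℝ))
    (hclosed : IsClosed Λ) (hper : Periodic2 Λ)
    (k : ℕ) (hk2 : 2 ≤ k) (hkn : k ≤ n - 1) (a b : ℝ) (hab : a < b)
    (hdense : Set.Ioo a b ⊆ closure (Set.Ioo a b ∩ projStarNe Λ k)) :
    ∃ c d : ℝ, c < d ∧ Set.Ioo c d ⊆ Set.Ioo a b ∧
      Set.Ioo c d ∩ proj Λ ⊆
        (⋃ j ∈ Finset.Ico k n, projExact Λ j) ∪ projAtLeast Λ n := by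
  have hmid : (a + b) / 2 ∈ Set.Ioo a b := ⟨by linarith, by linarith⟩
  obtain ⟨ξ₀, hξab, ⟨⟨_, hcard⟩, a', b', hξ', φ, hφ, hroot⟩⟩ :=
    closure_nonempty_iff.1 ⟨_, hdense hmid⟩
  have hfin : (Img Λ ξ₀).Finite := Set.finite_of_encard_eq_coe hcard
  -- separation
  obtain ⟨ε, hε, hsep⟩ : ∃ ε : ℝ, 0 < ε ∧ ∀ x ∈ Img Λ ξ₀, ∀ y ∈ Img Λ ξ₀, x ≠ y →
      2 * ε < dist (cexpEta x) (cexpEta y) := by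
    have : ∀ᶠ ε : ℝ in nhdsWithin 0 (Set.Ioi 0), ∀ x ∈ Img Λ ξ₀, ∀ y ∈ Img Λ ξ₀, x ≠ y →
        2 * ε < dist (cexpEta x) (cexpEta y) := by
      refine (Filter.eventually_all_finite hfin).2 fun x hx => ?_
      refine (Filter.eventually_all_finite hfin).2 fun y hy => ?_
      by_cases hxy : x = y
      · exact Filter.Eventually.of_forall fun _ h => absurd hxy h
      · have hpos : 0 < dist (cexpEta x) (cexpEta y) :=
          dist_pos.2 fun h => hxy (aux_cexp_inj hx.1 hy.1 h)
        filter_upwards [Ioo_mem_nhdsGT (half_pos hpos)] with e he _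
        linarith [he.2]
    obtain ⟨ε, h1, h2⟩ := (this.and self_mem_nhdsWithin).exists
    exact ⟨ε, h2, h1⟩
  -- the neighbourhood
  have hP : ∀ z : ℂ, Continuous fun ξ : ℝ =>
      ‖(∑ i : Fin k, FT (φ i) ξ * z ^ (i : ℕ)) + z ^ k‖ := by
    intro z
    have := fun i => aux_FT_cont (φ i) (hφ i)
    fun_prop
  have hξ₀k : ξ₀ ∈ projExact Λ k := ⟨by assumption, hcard⟩
  have hev : ∀ᶠ ξ in nhds ξ₀, ∀ η ∈ Img Λ ξ₀,
      ‖(∑ i : Fin k, FT (φ i) ξ * cexpEta η ^ (i : ℕ)) + cexpEta η ^ k‖ < ε ^ k := by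
    refine (Filter.eventually_all_finite hfin).2 fun η hη => ?_
    refine (hP (cexpEta η)).continuousAt.eventually_lt continuousAt_const ?_
    rw [hroot ξ₀ ⟨hξ', hξ₀k⟩ η hη]
    simpa using pow_pos hε k
  have hA : ∀ᶠ ξ in nhds ξ₀, ξ ∈ Set.Ioo a' b' := Ioo_mem_nhds hξ'.1 hξ'.2
  have hB : ∀ᶠ ξ in nhds ξ₀, ξ ∈ Set.Ioo a b := Ioo_mem_nhds hξab.1 hξab.2
  have hev2 := hev.and (hA.and hB)
  obtain ⟨c, d, hcd, hsub⟩ := mem_nhds_iff_exists_Ioo_subset.1 hev2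
  refine ⟨c, d, hcd.1.trans hcd.2, fun x hx => (hsub hx).2.2, ?_⟩
  have hk : ∀ ξ ∈ Set.Ioo c d, ξ ∈ projExact Λ k → ∀ η ∈ Img Λ ξ₀,
      ∃ η' ∈ Set.Icc (0 : ℝ) 2, (ξ, η') ∈ Λ ∧ dist (cexpEta η') (cexpEta η) ≤ ε := by
    intro ξ hξ hξk η hη
    have hfin' : (Img Λ ξ).Finite := Set.finite_of_encard_eq_coe hξk.2
    have hinj : Set.InjOn cexpEta (hfin'.toFinset : Set ℝ) := by
      intro x hx y hy h
      rw [Set.Finite.coe_toFinset] at hx hy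
      exact aux_cexp_inj hx.1 hy.1 h
    have hcardS : (hfin'.toFinset.image cexpEta).card = k := by
      rw [Finset.card_image_of_injOn hinj]
      have := hξk.2
      rw [hfin'.encard_eq_coe_toFinset_card] at this
      exact_mod_cast this
    have hprod := aux_poly k (fun i => FT (φ i) ξ) (hfin'.toFinset.image cexpEta) hcardS
      (by
        intro w hw
        obtain ⟨η', hη', rfl⟩ := Finset.mem_image.1 hw
        exact hroot ξ ⟨(hsub hξ).2.1, hξk⟩ η' (hfin'.mem_toFinset.1 hη')) (cexpEta η)
    by_contra hno
    push Not at hno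
    have hlt := (hsub hξ).1 η hη
    rw [hprod, norm_prod] at hlt
    have : ε ^ k ≤ ∏ w ∈ hfin'.toFinset.image cexpEta, ‖cexpEta η - w‖ := by
      rw [← hcardS, ← Finset.prod_const]
      refine Finset.prod_le_prod (fun _ _ => hε.le) ?_
      intro w hw
      obtain ⟨η', hη', rfl⟩ := Finset.mem_image.1 hw
      have h1 := hfin'.mem_toFinset.1 hη'
      have := hno η' ⟨h1.1.1, h1.1.2.le⟩ h1.2
      rw [dist_comm, dist_eq_norm] at this
      exact this.le
    linarith
  have hall : ∀ ξ ∈ Set.Ioo c d, ∀ η ∈ Img Λ ξ₀,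
      ∃ η' ∈ Img Λ ξ, dist (cexpEta η') (cexpEta η) ≤ ε := by
    intro ξ hξ η hη
    apply aux_Ico Λ hper
    have hcl := aux_closed Λ hclosed (cexpEta η) ε
    have h1 : ξ ∈ closure (Set.Ioo c d ∩ (Set.Ioo a b ∩ projStarNe Λ k)) :=
      isOpen_Ioo.inter_closure ⟨hξ, hdense (hsub hξ).2.2⟩
    exact closure_minimal (fun x hx => hk x hx.1 hx.2.2.1 η hη) hcl h1
  rintro ξ ⟨hξ, hξΛ⟩
  have hle : (k : ℕ∞) ≤ (Img Λ ξ).encard := by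
    rw [← hcard]
    choose! g hg1 hg2 using hall ξ hξ
    refine Set.encard_le_encard_of_injOn (f := g) hg1 ?_
    intro x hx y hy hxy
    by_contra hne
    have h1 := hsep x hx y hy hne
    have h2 := hg2 x hx
    have h3 := hg2 y hy
    rw [← hxy] at h3
    have := dist_triangle_left (cexpEta x) (cexpEta y) (cexpEta (g x))
    linarith
  by_cases hn' : (n : ℕ∞) ≤ (Img Λ ξ).encard
  · exact Or.inr ⟨hξΛ, hn'⟩
  · left
    push Not at hn'
    obtain ⟨j, hj⟩ := ENat.ne_top_iff_exists.1 hn'.ne_top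
    rw [← hj] at hle hn'
    simp only [Set.mem_iUnion]
    refine ⟨j, Finset.mem_Ico.2 ⟨by exact_mod_cast hle, by exact_mod_cast hn'⟩, hξΛ, hj.symm⟩
end

section
/- Let n ≥ 2 be an integer, Γ = ℝ × {0, 1, …, n−1}, and let Λ ⊂ ℝ² be a closed set that is 2-periodic with respect to the second variable. If (Γ, Λ) is a Heisenberg uniqueness pair, then for every k with 1 ≤ k ≤ n−1 there is no nonempty open interval J ⊂ ℝ such that Π(Λ) ∩ J is nonempty and Π(Λ) ∩ J ⊂ Π^{k*}_{ne}(Λ). -/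
open MeasureTheory Complex

/-- `Π^{k*}_{ne}(Λ)` including the convention `Π^{1*}_{ne}(Λ) := Π^{1*}(Λ)`. -/
def projStarNeGen (Λ : Set (ℝ × ℝ)) (n k : ℕ) : Set ℝ :=
  if k = 1 then projOneStar Λ n else projStarNe Λ k

open scoped FourierTransform Convolution

lemma FT_eq_fourier (f : ℝ → ℂ) (ξ : ℝ) : FT f ξ = 𝓕 f (-ξ / 2) := by
  rw [Real.fourier_real_eq_integral_exp_smul, FT]
  congr 1
  ext x
  rw [smul_eq_mul]
  congr 2
  push_cast
  ring

lemma FT_zero' (ξ : ℝ) : FT (0 : ℝ → ℂ) ξ = 0 := by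
  simp [FT]

lemma FT_conv {f g : ℝ → ℂ} (hf : Integrable f) (hg : Integrable g) (ξ : ℝ) :
    FT (f ⋆[ContinuousLinearMap.mul ℂ ℂ] g) ξ = FT f ξ * FT g ξ := by
  simp only [FT_eq_fourier]
  exact Real.fourier_mul_convolution_eq hf hg _

lemma exists_bump (a b ξ : ℝ) (h : ξ ∈ Set.Ioo a b) :
    ∃ g : ℝ → ℂ, Integrable g ∧ FT g ξ = 1 ∧ ∀ x, x ∉ Set.Ioo a b → FT g x = 0 := by
  have hr : 0 < min (ξ - a) (b - ξ) := lt_min (by linarith [h.1]) (by linarith [h.2])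
  set r := min (ξ - a) (b - ξ) with hrdef
  let B : ContDiffBump (-ξ / 2 : ℝ) := ⟨r / 4, r / 2, by linarith, by linarith⟩
  have hc : HasCompactSupport (fun x => ((B x : ℝ) : ℂ)) :=
    B.hasCompactSupport.comp_left (g := fun t : ℝ => (t : ℂ)) (by simp)
  have hs : ContDiff ℝ (⊤ : ℕ∞) (fun x => ((B x : ℝ) : ℂ)) :=
    Complex.ofRealCLM.contDiff.comp B.contDiff
  let H : SchwartzMap ℝ ℂ := hc.toSchwartzMap hs
  have key : ∀ x, FT (⇑(𝓕⁻ H : SchwartzMap ℝ ℂ)) x = ((B (-x / 2) : ℝ) : ℂ) := by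
    intro x
    rw [FT_eq_fourier, ← SchwartzMap.fourier_coe, FourierTransform.fourier_fourierInv_eq]
    rfl
  refine ⟨⇑(𝓕⁻ H : SchwartzMap ℝ ℂ), SchwartzMap.integrable _, ?_, ?_⟩
  · rw [key]
    have : B (-ξ / 2) = 1 := B.one_of_mem_closedBall (by
      simp only [Metric.mem_closedBall, dist_self]; change 0 ≤ r / 4; linarith)
    rw [this]; simp
  · intro x hx
    rw [key]
    have : B (-x / 2) = 0 := by
      apply B.zero_of_le_dist
      change r / 2 ≤ dist (-x / 2) (-ξ / 2)
      rw [Real.dist_eq]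
      by_contra hlt
      rw [not_le, abs_lt] at hlt
      have h1 := min_le_left (ξ - a) (b - ξ)
      have h2 := min_le_right (ξ - a) (b - ξ)
      exact hx ⟨by linarith [hlt.1, hlt.2], by linarith [hlt.1, hlt.2]⟩
    rw [this]; simp

lemma not_hup (n d : ℕ) (hd : d < n) (Λ : Set (ℝ × ℝ)) (a b ξ₀ : ℝ) (h : ξ₀ ∈ Set.Ioo a b)
    (φ : Fin d → ℝ → ℂ) (hφ : ∀ i, Integrable (φ i))
    (hz : ∀ ξ ∈ Set.Ioo a b, ∀ η, (ξ, η) ∈ Λ →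
      (∑ i : Fin d, FT (φ i) ξ * cexpEta η ^ (i : ℕ)) + cexpEta η ^ d = 0) :
    ¬ IsHUP n Λ := by
  intro hH
  obtain ⟨g, hg, hg1, hg0⟩ := exists_bump a b ξ₀ h
  let G : ℕ → ℝ → ℂ := fun m =>
    if hm : m < d then (φ ⟨m, hm⟩ ⋆[ContinuousLinearMap.mul ℂ ℂ] g)
    else if m = d then g else 0
  have hGd : G d = g := by simp [G]
  have hGi : ∀ m, Integrable (G m) := by
    intro m
    by_cases hm : m < d
    · simp only [G, hm, dif_pos]
      exact (hφ _).integrable_convolution _ hg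
    · by_cases hm2 : m = d
      · rw [hm2, hGd]; exact hg
      · simp only [G, hm, hm2, dif_neg, if_neg, not_false_eq_true]
        exact integrable_zero _ _ _
  have hae := hH (fun m => G m) (fun m => hGi m) ?_ ⟨d, hd⟩
  · simp only [hGd] at hae
    have h0 : FT g ξ₀ = 0 := by
      rw [← FT_zero' ξ₀]
      apply integral_congr_ae
      filter_upwards [hae] with x hx
      rw [hx]
    rw [hg1] at h0
    exact one_ne_zero h0
  · intro ξ η hΛ
    have e1 : ∑ m : Fin n, cexpEta η ^ (m : ℕ) * FT (G m) ξ
        = ∑ m ∈ Finset.range n, cexpEta η ^ m * FT (G m) ξ :=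
      (Finset.sum_range (fun m => cexpEta η ^ m * FT (G m) ξ)).symm
    have e2 : ∑ m ∈ Finset.range n, cexpEta η ^ m * FT (G m) ξ
        = ∑ m ∈ Finset.range (d + 1), cexpEta η ^ m * FT (G m) ξ := by
      symm
      apply Finset.sum_subset
      · intro x hx
        simp only [Finset.mem_range] at hx ⊢
        omega
      · intro x _ hx
        simp only [Finset.mem_range] at hx
        have : G x = 0 := by
          simp only [G]
          rw [dif_neg (by omega), if_neg (by omega)]
        rw [this, FT_zero', mul_zero]
    have e3 : ∑ m ∈ Finset.range d, cexpEta η ^ m * FT (G m) ξ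
        = (∑ i : Fin d, FT (φ i) ξ * cexpEta η ^ (i : ℕ)) * FT g ξ := by
      rw [Finset.sum_range, Finset.sum_mul]
      apply Finset.sum_congr rfl
      intro i _
      have : G i = (φ i ⋆[ContinuousLinearMap.mul ℂ ℂ] g) := by simp [G]
      rw [this, FT_conv (hφ i) hg]
      ring
    rw [e1, e2, Finset.sum_range_succ, e3, hGd, ← add_mul]
    by_cases hξ : ξ ∈ Set.Ioo a b
    · rw [hz ξ hξ η hΛ, zero_mul]
    · rw [hg0 ξ hξ, mul_zero]

lemma cexpEta_add_two (η : ℝ) : cexpEta (η + 2) = cexpEta η := by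
  unfold cexpEta
  rw [Complex.exp_eq_exp_iff_exists_int]
  exact ⟨1, by push_cast; ring⟩

lemma reduce_img (Λ : Set (ℝ × ℝ)) (hper : Periodic2 Λ) (ξ η : ℝ) (h : (ξ, η) ∈ Λ) :
    ∃ η' ∈ Img Λ ξ, cexpEta η = cexpEta η' := by
  have p1 : Function.Periodic (fun t : ℝ => ((ξ, t) ∈ Λ)) 2 := fun t =>
    propext (hper ξ t).symm
  have p2 : Function.Periodic cexpEta 2 := cexpEta_add_two
  have e : toIcoMod (two_pos : (0 : ℝ) < 2) 0 η = η - toIcoDiv (two_pos : (0 : ℝ) < 2) 0 η * 2 :=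
    (self_sub_toIcoDiv_mul _ _ _).symm
  refine ⟨toIcoMod (two_pos : (0 : ℝ) < 2) 0 η, ⟨toIcoMod_mem_Ico' _ _, ?_⟩, ?_⟩
  · rw [e]
    have := p1.sub_int_mul_eq (x := η) (toIcoDiv (two_pos : (0 : ℝ) < 2) 0 η)
    exact this.mpr h
  · rw [e]
    exact (p2.sub_int_mul_eq _).symm

theorem no_interval_in_single_star (n : ℕ) (hn : 2 ≤ n) (Λ : Set (ℝ × ℝ))
    (hclosed : IsClosed Λ) (hper : Periodic2 Λ) (hHUP : IsHUP n Λ) :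
    ∀ k : ℕ, 1 ≤ k → k ≤ n - 1 →
      ¬ ∃ a b : ℝ, a < b ∧ (proj Λ ∩ Set.Ioo a b).Nonempty ∧
        proj Λ ∩ Set.Ioo a b ⊆ projStarNeGen Λ n k := by
  rintro k hk1 hkn ⟨a, b, _, ⟨ξ₀, hξ₀, hξab⟩, hsub⟩
  have hex : ∀ ξ ∈ proj Λ ∩ Set.Ioo a b, ξ ∈ projExact Λ k := by
    intro ξ hξ
    have := hsub hξ
    unfold projStarNeGen at this
    split_ifs at this with hk
    · rw [hk]; exact this.1
    · exact this.1
  have hmem := hsub ⟨hξ₀, hξab⟩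
  unfold projStarNeGen at hmem
  split_ifs at hmem with hk
  · subst hk
    obtain ⟨_, χ, hχ, c, e, hce, φ, hφ, hz⟩ := hmem
    refine not_hup n (n - 1) (by omega) Λ (max a c) (min b e) ξ₀
      ⟨max_lt hξab.1 hce.1, lt_min hξab.2 hce.2⟩ φ hφ ?_ hHUP
    rintro ξ ⟨h1, h2⟩ η hη
    rw [max_lt_iff] at h1
    rw [lt_min_iff] at h2
    have hE := hex ξ ⟨⟨η, hη⟩, h1.1, h2.1⟩
    obtain ⟨η', hη', he⟩ := reduce_img Λ hper ξ η hη
    have := hz ξ ⟨⟨h1.2, h2.2⟩, hE⟩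
    rw [hχ ξ hE η' hη'] at this
    rw [he]
    exact this
  · obtain ⟨_, c, e, hce, φ, hφ, hz⟩ := hmem
    refine not_hup n k (by omega) Λ (max a c) (min b e) ξ₀
      ⟨max_lt hξab.1 hce.1, lt_min hξab.2 hce.2⟩ φ hφ ?_ hHUP
    rintro ξ ⟨h1, h2⟩ η hη
    rw [max_lt_iff] at h1
    rw [lt_min_iff] at h2
    have hE := hex ξ ⟨⟨η, hη⟩, h1.1, h2.1⟩
    obtain ⟨η', hη', he⟩ := reduce_img Λ hper ξ η hη
    rw [he, hz ξ ⟨⟨h1.2, h2.2⟩, hE⟩ η' hη']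
    ring
end
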